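/- Let K > 0 and J ∈ ℝ, and assume φ_{K,J} attains its minimum over [−1,1] at a unique point m* ∈ (−1,1) with φ_{K,J}''(m*) > 0. Let (a_n)_n be a sequence of positive reals with a_n → ∞ and a_n/n^{1/6} → 0. Then for every x ≥ 0: lim_{n→∞} (1/a_n²)·log P_{n,K,J}( W_n > a_n·x ) = −x²/2 and lim_{n→∞} (1/a_n²)·log P_{n,K,J}( W_n < −a_n·x ) = −x²/2 (moderate deviation principle for the rescaled magnetization with speed a_n² and rate function x²/2). -/

import Mathlib

/-!
The law of the magnetization is a sum over the number `k` of plus-spins, with weights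
`C(n,k) exp (n ((K/3) m³ + (J/2) m²))` at `m = (2k - n)/n` (`cubicProb_eq`). Since `C(n,k)` equals
`exp (-n I(m))` up to a factor of order `1/√n` (`choose_stirling`), the level weights, rescaled by
`exp (n φ(m*))`, are comparable to `exp (-n (φ(m) - φ(m*))) / √n`.

Near `m*` the Taylor expansion `φ(m) - φ(m*) = (φ''(m*)/2 + o(1)) (m - m*)²` turns this into a
Gaussian profile of width `1/√n` (`local_bounds`), while at a fixed distance from `m*` compactness
and uniqueness of the minimizer give an exponentially small contribution (`phi_gap`). Hence, for
every `ε`, the rescaled weight of `{|m - m*| ≥ r}` is at most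
`C exp (-(1-ε) n φ''(m*) r²/2) + (n+1) exp (-nη)`, the lattice sum being controlled by a geometric
series (`upper_bound`). Conversely each of the windows of length `1/√n` adjacent to `m* ± r`
contains at least `√n/4` levels, so its rescaled weight is at least
`(1/16) exp (-(1+ε) n φ''(m*) (r + 1/√n)²/2)` (`lower_bound`). With `r = 0` both estimates show
that the rescaled partition function stays between two positive constants; no power of `n` is lost,
which matters because `a_n` may grow arbitrarily slowly.

The event `W_n > a_n x` is `m - m* > r_n` with `n φ''(m*) r_n² = (a_n x)²`. The bounds above then
give `log P = -(1 + O(ε)) (a_n x + O(1))²/2 + O(1)`, the exponential remainder being negligible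
because `a_n²/n → 0`. Dividing by `a_n²` and letting `ε → 0` yields the limit (`side_limit`).
-/

open MeasureTheory ProbabilityTheory Real Filter

noncomputable section

/-- The spin value `±1` associated with a Boolean. -/
def spin (b : Bool) : ℝ := if b then 1 else -1

/-- Total magnetization `S_n(x) = ∑ i, x_i`. -/
def totalMag (n : ℕ) (x : Fin n → Bool) : ℝ := ∑ i, spin (x i)

/-- Magnetization per particle `m_n(x) = S_n(x)/n`. -/
def magPP (n : ℕ) (x : Fin n → Bool) : ℝ := totalMag n x / n

/-- Boltzmann–Gibbs weight of a configuration in the cubic Curie–Weiss model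
(the reference factor `2^{-n}` is constant and cancels upon normalization). -/
def cubicWeight (n : ℕ) (K J : ℝ) (x : Fin n → Bool) : ℝ :=
  Real.exp (n * (K / 3 * (magPP n x) ^ 3 + J / 2 * (magPP n x) ^ 2))

/-- The cubic Curie–Weiss Boltzmann–Gibbs probability measure `P_{n,K,J}`. -/
def cubicMeasure (n : ℕ) (K J : ℝ) : Measure (Fin n → Bool) :=
  (∑ x : Fin n → Bool, ENNReal.ofReal (cubicWeight n K J x))⁻¹ •
    ∑ x : Fin n → Bool, ENNReal.ofReal (cubicWeight n K J x) • Measure.dirac x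

/-- The probability of an event under `P_{n,K,J}`, as a real number. -/
def cubicProb (n : ℕ) (K J : ℝ) (s : Set (Fin n → Bool)) : ℝ :=
  (cubicMeasure n K J s).toReal

/-- The binary relative entropy `I(m)`. -/
def binEnt (m : ℝ) : ℝ :=
  (1 - m) / 2 * Real.log ((1 - m) / 2) + (1 + m) / 2 * Real.log ((1 + m) / 2)

/-- The function `φ_{K,J}(x) = I(x) − (K/3)x³ − (J/2)x²`. -/
def phiKJ (K J : ℝ) (x : ℝ) : ℝ := binEnt x - K / 3 * x ^ 3 - J / 2 * x ^ 2

/-- The standard normal cumulative distribution function. -/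
def stdNormalCDF (z : ℝ) : ℝ :=
  (ProbabilityTheory.gaussianReal 0 1 (Set.Iic z)).toReal

end

/-! ### Reduction to sums over the number of plus-spins -/

/-- The magnetization per particle of a configuration with `k` plus-spins. -/
noncomputable def mag (n k : ℕ) : ℝ := (2 * k - n) / n

/-- The total Gibbs weight of all configurations with `k` plus-spins. -/
noncomputable def levelWeight (n : ℕ) (K J : ℝ) (k : ℕ) : ℝ :=
  n.choose k * exp (n * (K / 3 * mag n k ^ 3 + J / 2 * mag n k ^ 2))

lemma levelWeight_pos {n k : ℕ} (K J : ℝ) (hk : k ≤ n) : 0 < levelWeight n K J k := by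
  have : 0 < n.choose k := Nat.choose_pos hk
  unfold levelWeight
  positivity

lemma totalMag_eq (n : ℕ) (s : Finset (Fin n)) :
    totalMag n (fun i => decide (i ∈ s)) = 2 * s.card - n := by
  have h : ∀ i : Fin n, spin (decide (i ∈ s)) = 2 * (if i ∈ s then 1 else 0) - 1 := by
    intro i
    by_cases hi : i ∈ s
    · simp [spin, hi]; norm_num
    · simp [spin, hi]
  simp only [totalMag, h, Finset.sum_sub_distrib, ← Finset.mul_sum]
  simp

lemma sum_config (n : ℕ) (f : ℝ → ℝ) :
    ∑ x : Fin n → Bool, f (totalMag n x) =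
      ∑ k ∈ Finset.range (n + 1), n.choose k * f (2 * k - n) := by
  have h1 : ∑ x : Fin n → Bool, f (totalMag n x) =
      ∑ s : Finset (Fin n), f (2 * (s.card : ℝ) - n) := by
    symm
    refine Fintype.sum_equiv
      { toFun := fun s i => decide (i ∈ s)
        invFun := fun x => Finset.univ.filter fun i => x i = true
        left_inv := fun s => by ext; simp
        right_inv := fun x => by ext; simp } _ _ fun s => ?_
    simp only [Equiv.coe_fn_mk, totalMag_eq]
  rw [h1, ← Finset.powerset_univ,
    Finset.sum_powerset_apply_card (fun k : ℕ => f (2 * (k : ℝ) - n))]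
  simp

open Classical in
/-- Probabilities of events depending only on the magnetization are ratios of sums of level
weights. -/
lemma cubicProb_eq (n : ℕ) (K J : ℝ) (p : ℝ → Prop) :
    cubicProb n K J {y | p (totalMag n y)} =
      (∑ k ∈ (Finset.range (n + 1)).filter (fun k : ℕ => p (2 * k - n)), levelWeight n K J k) /
        ∑ k ∈ Finset.range (n + 1), levelWeight n K J k := by
  have hw : ∀ x, 0 ≤ cubicWeight n K J x := fun x => (exp_pos _).le
  have h1 : cubicMeasure n K J {y | p (totalMag n y)} =
      (ENNReal.ofReal (∑ x, cubicWeight n K J x))⁻¹ * ENNReal.ofReal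
        (∑ x, if p (totalMag n x) then cubicWeight n K J x else 0) := by
    rw [ENNReal.ofReal_sum_of_nonneg (fun x _ => hw x), ENNReal.ofReal_sum_of_nonneg]
    · simp only [cubicMeasure, Measure.smul_apply, Measure.finsetSum_apply, smul_eq_mul,
        Measure.dirac_apply]
      congr 1
      refine Finset.sum_congr rfl fun x _ => ?_
      by_cases hx : p (totalMag n x) <;> simp [hx, Set.indicator]
    · intro x _
      split_ifs <;> simp [hw]
  have h2 := sum_config n (fun t => exp (n * (K / 3 * (t / n) ^ 3 + J / 2 * (t / n) ^ 2)))
  have h3 := sum_config n (fun t => if p t then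
    exp (n * (K / 3 * (t / n) ^ 3 + J / 2 * (t / n) ^ 2)) else 0)
  have hnum : 0 ≤ ∑ x, if p (totalMag n x) then cubicWeight n K J x else 0 :=
    Finset.sum_nonneg fun x _ => by split_ifs <;> simp [hw]
  have hden : 0 ≤ ∑ x, cubicWeight n K J x := Finset.sum_nonneg fun x _ => hw x
  rw [cubicProb, h1, ENNReal.toReal_mul, ENNReal.toReal_inv, ENNReal.toReal_ofReal hnum,
    ENNReal.toReal_ofReal hden, div_eq_inv_mul]
  unfold cubicWeight magPP levelWeight mag
  rw [h2, h3, Finset.sum_filter]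
  simp only [mul_ite, mul_zero]

/-! ### Binomial coefficients -/

lemma factorial_upper {n : ℕ} (hn : n ≠ 0) : (n.factorial : ℝ) ≤ exp 1 * √n * (n / exp 1) ^ n := by
  obtain ⟨m, rfl⟩ := Nat.exists_eq_succ_of_ne_zero hn
  have h := Stirling.stirlingSeq'_antitone (Nat.zero_le m)
  simp only [Function.comp, Nat.succ_eq_add_one, zero_add, Stirling.stirlingSeq_one] at h
  rw [Stirling.stirlingSeq, div_le_iff₀ (by positivity), Real.sqrt_mul (by norm_num)] at h
  refine h.trans (le_of_eq ?_)
  have : √(2:ℝ) ≠ 0 := by positivity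
  field_simp

/-- The entropy exponential at a lattice point, as a product of powers. The convention
`0 ^ 0 = 1` matches `0 * log 0 = 0` at the endpoints `k = 0` and `k = n`. -/
lemma exp_entropy {n k : ℕ} (hn : n ≠ 0) (hk : k ≤ n) :
    exp (-(n * binEnt (mag n k))) * (((k : ℝ) / n) ^ k * (((n - k : ℕ) : ℝ) / n) ^ (n - k)) = 1 := by
  have hn' : (n : ℝ) ≠ 0 := by positivity
  have key : ∀ j : ℕ, exp ((j : ℝ) * log ((j : ℝ) / n)) = ((j : ℝ) / n) ^ j := by
    intro j
    rcases Nat.eq_zero_or_pos j with rfl | hj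
    · simp
    · have : (0 : ℝ) < (j : ℝ) / n := by positivity
      rw [mul_comm, ← Real.rpow_def_of_pos this, Real.rpow_natCast]
  rw [← key, ← key, ← exp_add, ← exp_add, exp_eq_one_iff]
  have h1 : (1 - mag n k) / 2 = ((n - k : ℕ) : ℝ) / n := by
    rw [Nat.cast_sub hk, mag]; field_simp; ring
  have h2 : (1 + mag n k) / 2 = (k : ℝ) / n := by
    rw [mag]; field_simp; ring
  rw [binEnt, h1, h2]
  field_simp
  ring

/-- A single term of the binomial expansion of `(k/n + (n-k)/n) ^ n = 1` is at most one. -/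
lemma choose_le_exp {n k : ℕ} (hn : n ≠ 0) (hk : k ≤ n) :
    (n.choose k : ℝ) ≤ exp (-(n * binEnt (mag n k))) := by
  have h := exp_entropy hn hk
  have hn' : (n : ℝ) ≠ 0 := by positivity
  have hE : 0 < exp (-(n * binEnt (mag n k))) := exp_pos _
  set P := ((k : ℝ) / n) ^ k * (((n - k : ℕ) : ℝ) / n) ^ (n - k) with hP
  have hP0 : 0 < P := by
    have : 0 ≤ P := by positivity
    rcases this.eq_or_lt with h0 | h0
    · rw [← h0] at h; simp at h
    · exact h0
  have hb : P * n.choose k ≤ 1 := by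
    have := add_pow ((k : ℝ) / n) (((n - k : ℕ) : ℝ) / n) n
    have h1 : (k : ℝ) / n + ((n - k : ℕ) : ℝ) / n = 1 := by
      rw [Nat.cast_sub hk]; field_simp; ring
    rw [h1, one_pow] at this
    rw [this]
    exact Finset.single_le_sum
      (f := fun m => ((k : ℝ) / n) ^ m * (((n - k : ℕ) : ℝ) / n) ^ (n - m) * n.choose m)
      (fun i _ => by positivity) (Finset.mem_range.2 (by omega))
  have : (n.choose k : ℝ) = exp (-(n * binEnt (mag n k))) * (P * n.choose k) := by
    rw [← mul_assoc, h, one_mul]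
  rw [this]
  exact mul_le_of_le_one_right hE.le hb

set_option maxHeartbeats 1000000 in
/-- Two-sided Stirling estimate, up to universal constants, for interior `k`. -/
lemma choose_stirling {n k : ℕ} (hk : 0 < k) (hkn : k < n) :
    (1 / 4) / √n * exp (-(n * binEnt (mag n k))) ≤ n.choose k ∧
    (n.choose k : ℝ) ≤ √n / √(k * (n - k)) * exp (-(n * binEnt (mag n k))) := by
  have hn : n ≠ 0 := by omega
  have h := exp_entropy hn hkn.le
  obtain ⟨l, hl⟩ : ∃ l, l = n - k := ⟨_, rfl⟩
  have hl0 : l ≠ 0 := by omega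
  have hnl : (n : ℝ) - k = l := by rw [hl, Nat.cast_sub hkn.le]
  rw [← hl] at h
  rw [hnl]
  set E := exp (-(n * binEnt (mag n k))) with hE
  have hE0 : 0 < E := exp_pos _
  have hk' : (0 : ℝ) < k := by positivity
  have hl' : (0 : ℝ) < l := by positivity
  have hn' : (0 : ℝ) < n := by positivity
  have hc : (n.choose k : ℝ) * k.factorial * l.factorial = n.factorial := by
    rw [hl]; exact_mod_cast Nat.choose_mul_factorial_mul_factorial hkn.le
  -- the exponential parts of the three factorials combine to `E`
  have hX : ((k : ℝ) / exp 1) ^ k * ((l : ℝ) / exp 1) ^ l * E = ((n : ℝ) / exp 1) ^ n := by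
    have hnkl : n = k + l := by omega
    have h3 : ((n : ℝ) / exp 1) ^ n = ((n : ℝ) / exp 1) ^ k * ((n : ℝ) / exp 1) ^ l := by
      rw [← pow_add, ← hnkl]
    have h4 : (k : ℝ) / exp 1 = (n : ℝ) / exp 1 * ((k : ℝ) / n) := by field_simp
    have h5 : (l : ℝ) / exp 1 = (n : ℝ) / exp 1 * ((l : ℝ) / n) := by field_simp
    rw [h3, h4, h5, mul_pow, mul_pow]
    linear_combination ((n : ℝ) / exp 1) ^ k * ((n : ℝ) / exp 1) ^ l * h
  set X := ((k : ℝ) / exp 1) ^ k with hXd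
  set Y := ((l : ℝ) / exp 1) ^ l with hYd
  have hX0 : 0 < X := by positivity
  have hY0 : 0 < Y := by positivity
  have kl := Stirling.le_factorial_stirling k
  have ll := Stirling.le_factorial_stirling l
  have nl := Stirling.le_factorial_stirling n
  have ku := factorial_upper (n := k) (by omega)
  have lu := factorial_upper hl0
  have nu := factorial_upper hn
  rw [← hX] at nl nu
  rw [Real.sqrt_mul (by positivity)] at kl ll nl
  set s := √(2 * π) with hs
  have hs2 : s * s = 2 * π := Real.mul_self_sqrt (by positivity)
  have hspos : 0 < s := by positivity
  have hsk : 0 < √(k : ℝ) := by positivity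
  have hsl : 0 < √(l : ℝ) := by positivity
  have hsn : 0 < √(n : ℝ) := by positivity
  have he := Real.exp_one_lt_d9
  have he0 := exp_pos 1
  have hpi := Real.pi_gt_three
  have hkl0 : (0 : ℝ) < k.factorial * l.factorial := by positivity
  have hkn2 : √(k : ℝ) * √(l : ℝ) ≤ n / 2 := by
    have : (n : ℝ) = k + l := by rw [← hnl]; ring
    nlinarith [sq_nonneg (√(k : ℝ) - √(l : ℝ)), Real.sq_sqrt hk'.le, Real.sq_sqrt hl'.le]
  have hnn : √(n : ℝ) * √(n : ℝ) = n := Real.mul_self_sqrt hn'.le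
  constructor
  · have h1 : (k.factorial : ℝ) * l.factorial ≤ (exp 1 * √k * X) * (exp 1 * √l * Y) := by gcongr
    have h2 : 1 / 4 / √n * E * (k.factorial * l.factorial) ≤ n.choose k * (k.factorial * l.factorial) := by
      rw [← mul_assoc (n.choose k : ℝ), hc]
      refine le_trans ?_ nl
      calc 1 / 4 / √n * E * (k.factorial * l.factorial)
          ≤ 1 / 4 / √n * E * ((exp 1 * √k * X) * (exp 1 * √l * Y)) := by gcongr
        _ = exp 1 ^ 2 / 4 * (√k * √l / √n) * (X * Y * E) := by field_simp
        _ ≤ s * √n * (X * Y * E) := by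
          gcongr ?_ * _
          have h6 : √(k:ℝ) * √l / √n ≤ √n / 2 := by
            rw [div_le_iff₀ hsn]; linarith
          have h7 : exp 1 ^ 2 / 4 ≤ 2 := by nlinarith
          have h8 : 2 ≤ s := by nlinarith
          calc exp 1 ^ 2 / 4 * (√k * √l / √n) ≤ 2 * (√n / 2) := by gcongr
            _ ≤ s * √n := by nlinarith
    exact le_of_mul_le_mul_right h2 hkl0
  · have h1 : (s * √k * X) * (s * √l * Y) ≤ (k.factorial : ℝ) * l.factorial := by gcongr
    have h2 : n.choose k * (k.factorial * l.factorial) ≤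
        √n / √(k * l) * E * (k.factorial * l.factorial) := by
      rw [← mul_assoc (n.choose k : ℝ), hc]
      refine nu.trans ?_
      calc exp 1 * √n * (X * Y * E) ≤ (2 * π) * √n * (X * Y * E) := by
            gcongr; linarith
        _ = √n / √(k * l) * E * ((s * √k * X) * (s * √l * Y)) := by
            rw [Real.sqrt_mul hk'.le, ← hs2]; field_simp
        _ ≤ _ := by gcongr
    exact le_of_mul_le_mul_right h2 hkl0

/-! ### The rate function near its minimizer -/

lemma continuous_phiKJ (K J : ℝ) : Continuous (phiKJ K J) := by
  have h := Real.continuous_mul_log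
  have h1 : Continuous fun x : ℝ => (1 - x) / 2 * log ((1 - x) / 2) :=
    h.comp (by fun_prop : Continuous fun x : ℝ => (1 - x) / 2)
  have h2 : Continuous fun x : ℝ => (1 + x) / 2 * log ((1 + x) / 2) :=
    h.comp (by fun_prop : Continuous fun x : ℝ => (1 + x) / 2)
  unfold phiKJ binEnt
  fun_prop

lemma contDiffAt_phiKJ (K J : ℝ) {m : ℝ} (hm : m ∈ Set.Ioo (-1 : ℝ) 1) :
    ContDiffAt ℝ 2 (phiKJ K J) m := by
  have h1 : (1 - m) / 2 ≠ 0 := by have := hm.2; intro h; linarith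
  have h2 : (1 + m) / 2 ≠ 0 := by have := hm.1; intro h; linarith
  have l1 : ContDiffAt ℝ 2 (fun x : ℝ => log ((1 - x) / 2)) m :=
    ContDiffAt.log (by fun_prop) h1
  have l2 : ContDiffAt ℝ 2 (fun x : ℝ => log ((1 + x) / 2)) m :=
    ContDiffAt.log (by fun_prop) h2
  unfold phiKJ binEnt
  fun_prop

/-- Second-order Taylor expansion at a critical point, with Peano remainder. -/
lemma taylor_two {f : ℝ → ℝ} {m : ℝ} (hf : ContDiffAt ℝ 2 f m) (hd : deriv f m = 0)
    {ε : ℝ} (hε : 0 < ε) :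
    ∃ δ > 0, ∀ y, |y - m| ≤ δ →
      |f y - f m - iteratedDeriv 2 f m / 2 * (y - m) ^ 2| ≤ ε * (y - m) ^ 2 := by
  set c := iteratedDeriv 2 f m with hc
  have hdd : HasDerivAt (deriv f) c m := by
    have : DifferentiableAt ℝ (deriv f) m :=
      (hf.derivWithin (m := 1) (by norm_num)).differentiableAt (by norm_num)
    rw [hc, iteratedDeriv_succ, iteratedDeriv_one]
    exact this.hasDerivAt
  have ho := (hasDerivAt_iff_isLittleO.1 hdd).def hε
  have hdiff : ∀ᶠ y in nhds m, DifferentiableAt ℝ f y :=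
    (hf.eventually (by simp)).mono fun y hy => hy.differentiableAt (by norm_num)
  obtain ⟨δ, hδ, hball⟩ := Metric.eventually_nhds_iff.1 (ho.and hdiff)
  refine ⟨δ / 2, by positivity, fun y hy => ?_⟩
  have hmem : ∀ t ∈ Metric.closedBall m |y - m|, dist t m < δ := by
    intro t ht
    have : dist t m ≤ |y - m| := ht
    linarith
  have key := (convex_closedBall m |y - m|).norm_image_sub_le_of_norm_hasDerivWithin_le
    (f := fun t => f t - c / 2 * (t - m) ^ 2) (f' := fun t => deriv f t - c * (t - m))
    (C := ε * |y - m|) (x := m) (y := y) ?_ ?_ (by simp) (by simp [Real.dist_eq])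
  · simp only [Real.norm_eq_abs, sub_self] at key
    rw [← sq_abs (y - m)]
    convert key using 1
    · rw [sq_abs]; congr 1; ring
    · ring
  · intro t ht
    have h1 := (hball (hmem t ht)).2.hasDerivAt
    have h2 : HasDerivAt (fun t => c / 2 * (t - m) ^ 2) (c * (t - m)) t := by
      refine ((((hasDerivAt_id' t).sub_const m).fun_pow 2).const_mul (c / 2)).congr_deriv ?_
      simp; ring
    exact (h1.sub h2).hasDerivWithinAt
  · intro t ht
    have h1 := (hball (hmem t ht)).1
    rw [hd] at h1
    simp only [sub_zero, smul_eq_mul, Real.norm_eq_abs] at h1 ⊢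
    rw [mul_comm c]
    refine h1.trans ?_
    have : |t - m| ≤ |y - m| := ht
    gcongr

/-- Away from the unique minimizer the rate function exceeds its minimum by a fixed amount. -/
lemma phi_gap {K J m : ℝ}
    (hmin : ∀ y ∈ Set.Icc (-1 : ℝ) 1, phiKJ K J m ≤ phiKJ K J y)
    (huniq : ∀ y ∈ Set.Icc (-1 : ℝ) 1, phiKJ K J y = phiKJ K J m → y = m)
    {δ : ℝ} (hδ : 0 < δ) :
    ∃ η > 0, ∀ y ∈ Set.Icc (-1 : ℝ) 1, δ ≤ |y - m| → phiKJ K J m + η ≤ phiKJ K J y := by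
  have hc : IsCompact (Set.Icc (-1 : ℝ) 1 ∩ {y | δ ≤ |y - m|}) :=
    isCompact_Icc.inter_right (isClosed_le (by fun_prop) (by fun_prop))
  rcases Set.eq_empty_or_nonempty (Set.Icc (-1 : ℝ) 1 ∩ {y | δ ≤ |y - m|}) with he | hne
  · refine ⟨1, one_pos, fun y hy hyd => ?_⟩
    have : y ∈ (∅ : Set ℝ) := he ▸ ⟨hy, hyd⟩
    exact this.elim
  · obtain ⟨z, hz, hzmin⟩ := hc.exists_isMinOn hne (continuous_phiKJ K J).continuousOn
    refine ⟨phiKJ K J z - phiKJ K J m, ?_, fun y hy hyd => ?_⟩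
    · have h1 := hmin z hz.1
      rcases h1.eq_or_lt with h | h
      · have := huniq z hz.1 h.symm
        have hz2 : δ ≤ |z - m| := hz.2
        rw [this, sub_self, abs_zero] at hz2
        linarith
      · linarith
    · have : phiKJ K J z ≤ phiKJ K J y := hzmin ⟨hy, hyd⟩
      linarith

lemma deriv_phi_eq_zero {K J m : ℝ} (hmem : m ∈ Set.Ioo (-1 : ℝ) 1)
    (hmin : ∀ y ∈ Set.Icc (-1 : ℝ) 1, phiKJ K J m ≤ phiKJ K J y) :
    deriv (phiKJ K J) m = 0 := by
  apply IsLocalMin.deriv_eq_zero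
  filter_upwards [Icc_mem_nhds hmem.1 hmem.2] with y hy using hmin y hy

/-! ### Geometric sums over lattice points -/

lemma geom_inj_le {q : ℝ} (h0 : 0 ≤ q) (h1 : q < 1) (S : Finset ℕ) (f : ℕ → ℕ)
    (hf : Set.InjOn f S) : ∑ k ∈ S, q ^ f k ≤ 1 / (1 - q) := by
  rw [← Finset.sum_image (f := fun j => q ^ j) hf, one_div]
  exact sum_le_hasSum _ (fun i _ => pow_nonneg h0 i) (hasSum_geometric_of_lt_one h0 h1)

lemma exp_neg_le_pow_floor {s t : ℝ} (hs : 0 ≤ s) (ht : 0 ≤ t) :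
    exp (-(s * t)) ≤ exp (-s) ^ ⌊t⌋₊ := by
  rw [← Real.exp_nat_mul, exp_le_exp]
  nlinarith [Nat.floor_le ht]

lemma geom_const_le {s : ℝ} (hs : 0 < s) : 1 / (1 - exp (-s)) ≤ 1 + 1 / s := by
  have h1 : 1 + s ≤ exp s := by linarith [Real.add_one_le_exp s]
  have h2 : exp (-s) ≤ 1 / (1 + s) := by
    rw [exp_neg, ← one_div]; gcongr
  have h3 : s / (1 + s) ≤ 1 - exp (-s) := by
    have : s / (1 + s) = 1 - 1 / (1 + s) := by field_simp; ring
    linarith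
  calc 1 / (1 - exp (-s)) ≤ 1 / (s / (1 + s)) := by gcongr
    _ = 1 + 1 / s := by field_simp; ring

/-- Exponentially decaying sums over the integers at distance at least `ρ` from a real centre. -/
lemma sum_exp_two_sided_le {s : ℝ} (hs : 0 < s) (κ ρ : ℝ) (S : Finset ℕ)
    (hS : ∀ k ∈ S, ρ ≤ |(k : ℝ) - κ|) :
    ∑ k ∈ S, exp (-(s * (|(k : ℝ) - κ| - ρ))) ≤ 2 * (1 + 1 / s) := by
  have hq1 : exp (-s) < 1 := by rw [exp_lt_one_iff]; linarith
  have hterm : ∀ k ∈ S, exp (-(s * (|(k : ℝ) - κ| - ρ))) ≤ exp (-s) ^ ⌊|(k : ℝ) - κ| - ρ⌋₊ :=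
    fun k hk => exp_neg_le_pow_floor hs.le (by linarith [hS k hk])
  -- on each side of the centre, distinct integers have distinct floors
  have hside : ∀ T ⊆ S, (∀ i ∈ T, ∀ j ∈ T, i < j →
      1 ≤ |(|(i : ℝ) - κ| - ρ) - (|(j : ℝ) - κ| - ρ)|) →
      ∑ k ∈ T, exp (-s) ^ ⌊|(k : ℝ) - κ| - ρ⌋₊ ≤ 1 + 1 / s := by
    intro T hTS hT
    refine (geom_inj_le (exp_pos _).le hq1 T _ ?_).trans (geom_const_le hs)
    have aux : ∀ i ∈ T, ∀ j ∈ T, i < j →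
        ⌊|(i : ℝ) - κ| - ρ⌋₊ ≠ ⌊|(j : ℝ) - κ| - ρ⌋₊ := by
      intro i hi j hj hij heq
      have hi0 := hS i (hTS hi)
      have hj0 := hS j (hTS hj)
      have a1 := Nat.floor_le (sub_nonneg.2 hi0)
      have a2 := Nat.lt_floor_add_one (|(i : ℝ) - κ| - ρ)
      have a3 := Nat.floor_le (sub_nonneg.2 hj0)
      have a4 := Nat.lt_floor_add_one (|(j : ℝ) - κ| - ρ)
      rw [heq] at a1 a2
      have : |(|(i : ℝ) - κ| - ρ) - (|(j : ℝ) - κ| - ρ)| < 1 := by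
        rw [abs_lt]; constructor <;> linarith
      linarith [hT i hi j hj hij]
    intro i hi j hj hij
    rcases lt_trichotomy i j with h | h | h
    · exact (aux i hi j hj h hij).elim
    · exact h
    · exact (aux j hj i hi h hij.symm).elim
  refine (Finset.sum_le_sum hterm).trans ?_
  rw [← Finset.sum_filter_add_sum_filter_not S (fun k : ℕ => κ ≤ k), two_mul]
  refine add_le_add (hside _ (Finset.filter_subset _ _) ?_) (hside _ (Finset.filter_subset _ _) ?_)
  · intro i hi j hj hij
    have hi' := (Finset.mem_filter.1 hi).2
    have hj' := (Finset.mem_filter.1 hj).2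
    have hij' : (i : ℝ) + 1 ≤ j := by exact_mod_cast hij
    rw [abs_of_nonneg (sub_nonneg.2 hi'), abs_of_nonneg (sub_nonneg.2 hj'), le_abs]
    right; linarith
  · intro i hi j hj hij
    have hi' := not_le.1 (Finset.mem_filter.1 hi).2
    have hj' := not_le.1 (Finset.mem_filter.1 hj).2
    have hij' : (i : ℝ) + 1 ≤ j := by exact_mod_cast hij
    rw [abs_of_neg (sub_neg.2 hi'), abs_of_neg (sub_neg.2 hj'), le_abs]
    left; linarith

/-! ### Gaussian estimates for the level weights -/

lemma levelWeight_le {n k : ℕ} (K J : ℝ) (hn : n ≠ 0) (hk : k ≤ n) :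
    levelWeight n K J k ≤ exp (-(n * phiKJ K J (mag n k))) := by
  have h := choose_le_exp hn hk
  calc levelWeight n K J k ≤ exp (-(n * binEnt (mag n k))) *
        exp (n * (K / 3 * mag n k ^ 3 + J / 2 * mag n k ^ 2)) := by
        unfold levelWeight; gcongr
    _ = _ := by rw [← exp_add]; congr 1; unfold phiKJ; ring

lemma levelWeight_stirling {n k : ℕ} (K J : ℝ) (hk : 0 < k) (hkn : k < n) :
    (1 / 4) / √n * exp (-(n * phiKJ K J (mag n k))) ≤ levelWeight n K J k ∧
    levelWeight n K J k ≤ √n / √(k * (n - k)) * exp (-(n * phiKJ K J (mag n k))) := by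
  obtain ⟨h1, h2⟩ := choose_stirling hk hkn
  have h : exp (-(n * phiKJ K J (mag n k))) = exp (-(n * binEnt (mag n k))) *
        exp (n * (K / 3 * mag n k ^ 3 + J / 2 * mag n k ^ 2)) := by
    rw [← exp_add]; congr 1; unfold phiKJ; ring
  rw [h, ← mul_assoc, ← mul_assoc]
  unfold levelWeight
  constructor <;> gcongr

/-- Near the minimizer `m`, the normalized level weights are comparable, up to constants, to a
Gaussian profile of width of order `1 / √n`, with an arbitrarily small relative error in the
inverse variance. -/
lemma local_bounds {K J m : ℝ} (hmem : m ∈ Set.Ioo (-1 : ℝ) 1)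
    (hmin : ∀ y ∈ Set.Icc (-1 : ℝ) 1, phiKJ K J m ≤ phiKJ K J y)
    (hconv : 0 < iteratedDeriv 2 (phiKJ K J) m) {ε : ℝ} (hε : 0 < ε) :
    ∃ δ > 0, ∃ A > 0, δ < 1 - |m| ∧ ∀ n k : ℕ, n ≠ 0 → |mag n k - m| ≤ δ →
      k < n ∧
      levelWeight n K J k * exp (n * phiKJ K J m) ≤ A / √n *
        exp (-(n * (iteratedDeriv 2 (phiKJ K J) m / 2 * (1 - ε)) * (mag n k - m) ^ 2)) ∧
      (1 / 4) / √n *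
        exp (-(n * (iteratedDeriv 2 (phiKJ K J) m / 2 * (1 + ε)) * (mag n k - m) ^ 2)) ≤
        levelWeight n K J k * exp (n * phiKJ K J m) := by
  set c := iteratedDeriv 2 (phiKJ K J) m with hc
  obtain ⟨δ₁, hδ₁, ht⟩ := taylor_two (contDiffAt_phiKJ K J hmem) (deriv_phi_eq_zero hmem hmin)
    (ε := c / 2 * ε) (by positivity)
  have hm1 : |m| < 1 := abs_lt.2 hmem
  obtain ⟨τ, hτ⟩ : ∃ τ, τ = (1 - |m|) / 2 := ⟨_, rfl⟩
  have hτ0 : 0 < τ := by rw [hτ]; linarith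
  refine ⟨min δ₁ τ, lt_min hδ₁ hτ0, 2 / √τ, by positivity,
    (min_le_right _ _).trans_lt (by linarith), fun n k hn hu => ?_⟩
  have hn' : (0 : ℝ) < n := by positivity
  have hu1 := ht _ (hu.trans (min_le_left _ _))
  rw [← hc] at hu1
  have hmag : |mag n k| ≤ 1 - τ := by
    have h1 := hu.trans (min_le_right _ _)
    have h2 : |mag n k| ≤ |mag n k - m| + |m| := by
      calc |mag n k| = |(mag n k - m) + m| := by ring_nf
        _ ≤ _ := abs_add_le _ _
    rw [hτ] at h1 ⊢; linarith
  obtain ⟨hg1, hg2⟩ := abs_le.1 hmag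
  have hkr : (k : ℝ) = n * (1 + mag n k) / 2 := by rw [mag]; field_simp; ring
  have hkpos : 0 < k := by
    have : (0 : ℝ) < k := by rw [hkr]; have : 0 < 1 + mag n k := by linarith
                             positivity
    exact_mod_cast this
  have hkn : k < n := by
    have : (k : ℝ) < n := by rw [hkr]; nlinarith
    exact_mod_cast this
  obtain ⟨hl, hup⟩ := levelWeight_stirling K J hkpos hkn
  obtain ⟨hu2, hu3⟩ := abs_le.1 hu1
  have hexp : exp (-(n * phiKJ K J (mag n k))) * exp (n * phiKJ K J m) =
      exp (-(n * (phiKJ K J (mag n k) - phiKJ K J m))) := by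
    rw [← exp_add]; congr 1; ring
  refine ⟨hkn, ?_, ?_⟩
  · calc levelWeight n K J k * exp (n * phiKJ K J m)
        ≤ √n / √(k * (n - k)) * exp (-(n * phiKJ K J (mag n k))) * exp (n * phiKJ K J m) := by
          gcongr
      _ = √n / √(k * (n - k)) * exp (-(n * (phiKJ K J (mag n k) - phiKJ K J m))) := by
          rw [mul_assoc, hexp]
      _ ≤ _ := by
          gcongr ?_ * exp ?_
          · have h1 : (k : ℝ) * (n - k) = (n / 2) ^ 2 * (1 - mag n k ^ 2) := by
              have : (n : ℝ) - k = n * (1 - mag n k) / 2 := by rw [hkr]; ring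
              rw [this, hkr]; ring
            have h2 : τ ≤ 1 - mag n k ^ 2 := by nlinarith [sq_abs (mag n k), abs_nonneg (mag n k)]
            have h3 : n / 2 * √τ ≤ √(k * (n - k)) := by
              rw [h1, Real.sqrt_mul (by positivity), Real.sqrt_sq (by positivity)]
              gcongr
            calc √n / √(k * (n - k)) ≤ √n / (n / 2 * √τ) := by gcongr
              _ = 2 / √τ / √n := by
                nth_rewrite 2 [← Real.mul_self_sqrt hn'.le]
                field_simp
          · rw [mul_assoc]
            have : c / 2 * (1 - ε) * (mag n k - m) ^ 2 ≤ phiKJ K J (mag n k) - phiKJ K J m := by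
              linarith
            gcongr
  · calc _ ≤ 1 / 4 / √n * exp (-(n * (phiKJ K J (mag n k) - phiKJ K J m))) := by
          rw [mul_assoc (n : ℝ)]
          have : phiKJ K J (mag n k) - phiKJ K J m ≤ c / 2 * (1 + ε) * (mag n k - m) ^ 2 := by
            linarith
          gcongr
      _ = 1 / 4 / √n * exp (-(n * phiKJ K J (mag n k))) * exp (n * phiKJ K J m) := by
          rw [mul_assoc _ _ (exp (n * phiKJ K J m)), hexp]
      _ ≤ _ := by gcongr

/-- Gaussian upper bound for the normalized weight of `{|m_n - m| ≥ r}`, uniform in `r`. -/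
lemma upper_bound {K J m : ℝ} (hmem : m ∈ Set.Ioo (-1 : ℝ) 1)
    (hmin : ∀ y ∈ Set.Icc (-1 : ℝ) 1, phiKJ K J m ≤ phiKJ K J y)
    (huniq : ∀ y ∈ Set.Icc (-1 : ℝ) 1, phiKJ K J y = phiKJ K J m → y = m)
    (hconv : 0 < iteratedDeriv 2 (phiKJ K J) m) {ε : ℝ} (hε : 0 < ε) (hε1 : ε < 1) :
    ∃ C > 0, ∃ η > 0, ∀ n : ℕ, n ≠ 0 → ∀ r : ℝ, 0 ≤ r →
      ∑ k ∈ (Finset.range (n + 1)).filter (fun k => r ≤ |mag n k - m|),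
        levelWeight n K J k * exp (n * phiKJ K J m) ≤
      C * exp (-(n * (iteratedDeriv 2 (phiKJ K J) m / 2 * (1 - ε)) * r ^ 2)) +
        (n + 1) * exp (-(n * η)) := by
  obtain ⟨δ, hδ, A, hA, -, hloc⟩ := local_bounds hmem hmin hconv hε
  obtain ⟨η, hη, hgap⟩ := phi_gap hmin huniq hδ
  obtain ⟨b, hb⟩ : ∃ b, b = iteratedDeriv 2 (phiKJ K J) m / 2 * (1 - ε) := ⟨_, rfl⟩
  have hb0 : 0 < b := by rw [hb]; have : 0 < 1 - ε := by linarith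
                         positivity
  simp only [← hb] at hloc ⊢
  refine ⟨A * exp 1 * (2 * (1 + 1 / (2 * √b))), by positivity, η, hη, fun n hn r hr => ?_⟩
  have hn' : (0 : ℝ) < n := by positivity
  have hn1 : (1 : ℝ) ≤ n := by exact_mod_cast Nat.one_le_iff_ne_zero.2 hn
  have hsn : 0 < √(n : ℝ) := by positivity
  have hnn : √(n : ℝ) * √(n : ℝ) = n := Real.mul_self_sqrt hn'.le
  set S := (Finset.range (n + 1)).filter (fun k => r ≤ |mag n k - m|) with hS
  have hrange : ∀ k ∈ S, k ≤ n := fun k hk => by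
    have := Finset.mem_range.1 (Finset.mem_filter.1 hk).1; omega
  have hrk : ∀ k ∈ S, r ≤ |mag n k - m| := fun k hk => (Finset.mem_filter.1 hk).2
  rw [← Finset.sum_filter_add_sum_filter_not S (fun k : ℕ => |mag n k - m| ≤ δ)]
  refine add_le_add ?_ ?_
  · -- the bulk: complete the square around `r` and compare with a geometric series
    have habs : ∀ k : ℕ, |mag n k - m| = 2 / n * |(k : ℝ) - n * (1 + m) / 2| := by
      intro k
      have h1 : mag n k - m = 2 / n * ((k : ℝ) - n * (1 + m) / 2) := by
        rw [mag]; field_simp; ring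
      rw [h1, abs_mul, abs_of_pos (show (0 : ℝ) < 2 / n by positivity)]
    set s := 2 * √b / √n with hs
    have hs0 : 0 < s := by positivity
    have hterm : ∀ k ∈ S.filter (fun k : ℕ => |mag n k - m| ≤ δ),
        levelWeight n K J k * exp (n * phiKJ K J m) ≤ A / √n * exp 1 * exp (-(n * b * r ^ 2)) *
          exp (-(s * (|(k : ℝ) - n * (1 + m) / 2| - n * r / 2))) := by
      intro k hk
      obtain ⟨hkS, hkδ⟩ := Finset.mem_filter.1 hk
      refine (hloc n k hn hkδ).2.1.trans ?_
      rw [mul_assoc (A / √n), mul_assoc (A / √n), ← exp_add, ← exp_add]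
      gcongr
      have h1 := hrk k hkS
      rw [← sq_abs (mag n k - m)]
      have h2 : s * (|(k : ℝ) - n * (1 + m) / 2| - n * r / 2) =
          √n * √b * (|mag n k - m| - r) := by
        have h3 : √n * √b = s * n / 2 := by
          rw [hs, ← hnn, Real.sqrt_mul_self hsn.le]; field_simp
        rw [habs, h3]
        field_simp
      rw [h2]
      set u := |mag n k - m|
      have h3 : n * b = (√n * √b) ^ 2 := by
        rw [mul_pow, Real.sq_sqrt hn'.le, Real.sq_sqrt hb0.le]
      rw [h3]
      set z := √(n : ℝ) * √b
      have hz : 0 ≤ z := by positivity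
      have h4 : 0 ≤ z ^ 2 * (r * (u - r)) := by
        have : 0 ≤ u - r := by linarith
        positivity
      nlinarith [sq_nonneg (z * (u - r) - 1), sq_nonneg (z * (u - r))]
    refine (Finset.sum_le_sum hterm).trans ?_
    rw [← Finset.mul_sum]
    have hsum := sum_exp_two_sided_le hs0 (n * (1 + m) / 2) (n * r / 2)
      (S.filter (fun k : ℕ => |mag n k - m| ≤ δ)) (by
        intro k hk
        have h1 := hrk k (Finset.mem_filter.1 hk).1
        rw [habs] at h1
        have h2 : n / 2 * r ≤ n / 2 * (2 / n * |(k : ℝ) - n * (1 + m) / 2|) := by gcongr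
        have h3 : n / 2 * (2 / n * |(k : ℝ) - n * (1 + m) / 2|) = |(k : ℝ) - n * (1 + m) / 2| := by
          field_simp
        linarith)
    have hfin : A / √n * (2 * (1 + 1 / s)) ≤ A * (2 * (1 + 1 / (2 * √b))) := by
      have h1 : 1 / s = √n * (1 / (2 * √b)) := by rw [hs]; field_simp
      have h2 : 1 ≤ √(n : ℝ) := Real.one_le_sqrt.2 hn1
      rw [h1, div_mul_eq_mul_div, div_le_iff₀ hsn]
      have h3 : 0 < 1 / (2 * √b) := by positivity
      rw [mul_assoc]
      refine mul_le_mul_of_nonneg_left ?_ hA.le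
      nlinarith
    calc _ ≤ A / √n * exp 1 * exp (-(n * b * r ^ 2)) * (2 * (1 + 1 / s)) := by gcongr
      _ = (A / √n * (2 * (1 + 1 / s))) * (exp 1 * exp (-(n * b * r ^ 2))) := by ring
      _ ≤ (A * (2 * (1 + 1 / (2 * √b)))) * (exp 1 * exp (-(n * b * r ^ 2))) := by gcongr
      _ = _ := by ring
  · have hterm : ∀ k ∈ S.filter (fun k : ℕ => ¬ |mag n k - m| ≤ δ),
        levelWeight n K J k * exp (n * phiKJ K J m) ≤ exp (-(n * η)) := by
      intro k hk
      obtain ⟨hkS, hkδ⟩ := Finset.mem_filter.1 hk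
      have hkn := hrange k hkS
      have hkn' : (k : ℝ) ≤ n := by exact_mod_cast hkn
      have hIcc : mag n k ∈ Set.Icc (-1 : ℝ) 1 := by
        rw [mag]
        constructor
        · rw [le_div_iff₀ hn']; have : (0 : ℝ) ≤ k := by positivity
          linarith
        · rw [div_le_iff₀ hn']; linarith
      have hg := hgap _ hIcc (not_le.1 hkδ).le
      calc _ ≤ exp (-(n * phiKJ K J (mag n k))) * exp (n * phiKJ K J m) := by
            gcongr; exact levelWeight_le K J hn hkn
        _ ≤ _ := by
            rw [← exp_add, exp_le_exp]
            nlinarith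
    refine (Finset.sum_le_card_nsmul _ _ _ hterm).trans ?_
    rw [nsmul_eq_mul]
    gcongr
    have h1 := Finset.card_le_card (Finset.filter_subset (fun k : ℕ => ¬ |mag n k - m| ≤ δ) S)
    have h2 := Finset.card_le_card (Finset.filter_subset (fun k => r ≤ |mag n k - m|)
      (Finset.range (n + 1)))
    rw [Finset.card_range] at h2
    exact_mod_cast h1.trans h2

/-- Any set of at least `√n / 4` levels within distance `r + 1 / √n` of the minimizer carries
normalized weight bounded below by the Gaussian value at `r + 1 / √n`. -/
lemma lower_bound {K J m : ℝ} (hmem : m ∈ Set.Ioo (-1 : ℝ) 1)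
    (hmin : ∀ y ∈ Set.Icc (-1 : ℝ) 1, phiKJ K J m ≤ phiKJ K J y)
    (hconv : 0 < iteratedDeriv 2 (phiKJ K J) m) {ε : ℝ} (hε : 0 < ε) :
    ∃ δ > 0, δ < 1 - |m| ∧ ∀ n : ℕ, n ≠ 0 → ∀ R : ℝ, R ≤ δ → ∀ U : Finset ℕ,
      √n / 4 ≤ U.card → (∀ k ∈ U, |mag n k - m| ≤ R) →
      1 / 16 * exp (-(n * (iteratedDeriv 2 (phiKJ K J) m / 2 * (1 + ε)) * R ^ 2)) ≤
        ∑ k ∈ U, levelWeight n K J k * exp (n * phiKJ K J m) := by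
  obtain ⟨δ, hδ, A, hA, hδm, hloc⟩ := local_bounds hmem hmin hconv hε
  refine ⟨δ, hδ, hδm, fun n hn R hR U hU hUR => ?_⟩
  have hsn : 0 < √(n : ℝ) := by positivity
  set b := iteratedDeriv 2 (phiKJ K J) m / 2 * (1 + ε) with hb
  have hb0 : 0 < b := by positivity
  have hterm : ∀ k ∈ U, 1 / 4 / √n * exp (-(n * b * R ^ 2)) ≤
      levelWeight n K J k * exp (n * phiKJ K J m) := by
    intro k hk
    refine le_trans ?_ (hloc n k hn ((hUR k hk).trans hR)).2.2
    rw [← sq_abs (mag n k - m)]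
    have := hUR k hk
    gcongr
  refine le_trans ?_ (Finset.card_nsmul_le_sum _ _ _ hterm)
  rw [nsmul_eq_mul]
  calc _ = √n / 4 * (1 / 4 / √n * exp (-(n * b * R ^ 2))) := by field_simp; norm_num
    _ ≤ _ := by gcongr

/-! ### Passage to the logarithmic limit -/

/-- Gaussian upper and lower bounds, whose relative errors in the exponent can be made arbitrarily
small, determine the logarithmic limit at speed `a n ^ 2`. -/
lemma tendsto_log_of_bounds {a P : ℕ → ℝ} (hapos : ∀ n, 0 < a n)
    (hainf : Tendsto a atTop atTop) (x s : ℝ)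
    (hup : ∀ ε : ℝ, 0 < ε → ε < 1 → ∃ C > 0, ∀ᶠ n in atTop,
      P n ≤ C * exp (-((1 - ε) * (a n * x) ^ 2 / 2)))
    (hlow : ∀ ε : ℝ, 0 < ε → ε < 1 → ∃ C > 0, ∀ᶠ n in atTop,
      C * exp (-((1 + ε) * (a n * x + s) ^ 2 / 2)) ≤ P n) :
    Tendsto (fun n => 1 / a n ^ 2 * log (P n)) atTop (nhds (-(x ^ 2) / 2)) := by
  have hinv : Tendsto (fun n => (a n)⁻¹) atTop (nhds 0) := hainf.inv_tendsto_atTop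
  have hPpos : ∀ᶠ n in atTop, 0 < P n := by
    obtain ⟨C, hC, h⟩ := hlow (1 / 2) (by norm_num) (by norm_num)
    filter_upwards [h] with n hn
    exact lt_of_lt_of_le (by positivity) hn
  have hchoose : ∀ d : ℝ, 0 < d → ∃ ε : ℝ, 0 < ε ∧ ε < 1 ∧ ε * x ^ 2 / 2 < d := by
    intro d hd
    refine ⟨min (1 / 2) (d / (x ^ 2 + 1)), by positivity,
      (min_le_left _ _).trans_lt (by norm_num), ?_⟩
    have h1 : min (1 / 2) (d / (x ^ 2 + 1)) ≤ d / (x ^ 2 + 1) := min_le_right _ _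
    have h2 : d / (x ^ 2 + 1) * x ^ 2 ≤ d := by
      rw [div_mul_eq_mul_div, div_le_iff₀ (by positivity)]; nlinarith
    nlinarith [sq_nonneg x]
  refine tendsto_order.2 ⟨fun l hl => ?_, fun l hl => ?_⟩
  · obtain ⟨ε, hε, hε1, hεd⟩ := hchoose (-(x ^ 2) / 2 - l) (by linarith)
    obtain ⟨C, hC, h⟩ := hlow ε hε hε1
    have hlim : Tendsto (fun n => log C * (a n)⁻¹ ^ 2 - (1 + ε) * (x + s * (a n)⁻¹) ^ 2 / 2)
        atTop (nhds (log C * 0 ^ 2 - (1 + ε) * (x + s * 0) ^ 2 / 2)) :=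
      ((hinv.pow 2).const_mul _).sub
        (((((hinv.const_mul s).const_add x).pow 2).const_mul (1 + ε)).div_const 2)
    filter_upwards [h, hlim.eventually_const_lt (u := l) (by ring_nf at hεd ⊢; linarith)]
      with n hn hln
    have ha := hapos n
    refine hln.trans_le ?_
    have h1 := log_le_log (by positivity) hn
    rw [log_mul hC.ne' (exp_pos _).ne', log_exp] at h1
    calc _ = 1 / a n ^ 2 * (log C + -((1 + ε) * (a n * x + s) ^ 2 / 2)) := by
          field_simp; ring
      _ ≤ _ := by gcongr
  · obtain ⟨ε, hε, hε1, hεd⟩ := hchoose (l - -(x ^ 2) / 2) (by linarith)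
    obtain ⟨C, hC, h⟩ := hup ε hε hε1
    have hlim : Tendsto (fun n => log C * (a n)⁻¹ ^ 2 - (1 - ε) * x ^ 2 / 2)
        atTop (nhds (log C * 0 ^ 2 - (1 - ε) * x ^ 2 / 2)) :=
      ((hinv.pow 2).const_mul _).sub_const _
    filter_upwards [h, hPpos, hlim.eventually_lt_const (u := l) (by ring_nf at hεd ⊢; linarith)]
      with n hn hp hln
    have ha := hapos n
    refine lt_of_le_of_lt ?_ hln
    have h1 := log_le_log hp hn
    rw [log_mul hC.ne' (exp_pos _).ne', log_exp] at h1
    calc _ ≤ 1 / a n ^ 2 * (log C + -((1 - ε) * (a n * x) ^ 2 / 2)) := by gcongr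
      _ = _ := by field_simp; ring

lemma tendsto_div_sqrt {a : ℕ → ℝ}
    (haslow : Tendsto (fun n : ℕ => a n / (n : ℝ) ^ ((1 : ℝ) / 6)) atTop (nhds 0)) :
    Tendsto (fun n : ℕ => a n / √n) atTop (nhds 0) := by
  have h1 : Tendsto (fun n : ℕ => (n : ℝ) ^ (-(1 / 3) : ℝ)) atTop (nhds 0) :=
    (tendsto_rpow_neg_atTop (by norm_num)).comp tendsto_natCast_atTop_atTop
  have h2 := haslow.mul h1
  rw [mul_zero] at h2
  refine h2.congr' ?_
  filter_upwards [eventually_gt_atTop 0] with n hn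
  have hn' : (0 : ℝ) < n := by positivity
  rw [Real.sqrt_eq_rpow, div_mul_eq_mul_div, div_eq_div_iff (by positivity) (by positivity),
    mul_assoc, ← Real.rpow_add hn']
  norm_num

lemma eventually_poly_exp {η : ℝ} (hη : 0 < η) :
    ∀ᶠ n : ℕ in atTop, ((n : ℝ) + 1) * exp (-(n * η)) ≤ exp (-(n * (η / 2))) := by
  have h1 : Tendsto (fun n : ℕ => (n : ℝ) * (η / 2)) atTop atTop :=
    tendsto_natCast_atTop_atTop.atTop_mul_const (by positivity)
  have h2 := ((Real.tendsto_pow_mul_exp_neg_atTop_nhds_zero 1).comp h1).const_mul (2 / η)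
  have h3 := (Real.tendsto_exp_neg_atTop_nhds_zero).comp h1
  have h4 := h2.add h3
  filter_upwards [h4.eventually_lt_const (u := 1) (by simp)] with n hn
  simp only [Function.comp, pow_one] at hn
  have e : exp (-(n * η)) = exp (-(n * (η / 2))) * exp (-(n * (η / 2))) := by
    rw [← exp_add]; congr 1; ring
  have h5 : ((n : ℝ) + 1) * exp (-(n * (η / 2))) ≤ 1 := by
    refine le_trans (le_of_eq ?_) hn.le
    field_simp
  rw [e, ← mul_assoc]
  exact mul_le_of_le_one_left (exp_pos _).le h5

/-- The logarithmic limit for sets `T n` of levels that lie in `{|m_n - m| ≥ r_n}` and contain at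
least `√n / 4` levels at distance at most `r_n + 1 / √n` from `m`, namely `U n`. The sets `V n`
serve to bound the partition function from below. -/
lemma side_limit {K J m : ℝ} (hmem : m ∈ Set.Ioo (-1 : ℝ) 1)
    (hmin : ∀ y ∈ Set.Icc (-1 : ℝ) 1, phiKJ K J m ≤ phiKJ K J y)
    (huniq : ∀ y ∈ Set.Icc (-1 : ℝ) 1, phiKJ K J y = phiKJ K J m → y = m)
    (hconv : 0 < iteratedDeriv 2 (phiKJ K J) m)
    {a : ℕ → ℝ} (hapos : ∀ n, 0 < a n) (hainf : Tendsto a atTop atTop)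
    (hsq : Tendsto (fun n : ℕ => a n / √n) atTop (nhds 0)) {x : ℝ} (hx : 0 ≤ x)
    {r : ℕ → ℝ} (hr : ∀ n, r n = a n * x / (√n * √(iteratedDeriv 2 (phiKJ K J) m)))
    {T U V : ℕ → Finset ℕ}
    (hT : ∀ n, T n ⊆ (Finset.range (n + 1)).filter (fun k => r n ≤ |mag n k - m|))
    (hU : ∀ᶠ n in atTop, U n ⊆ T n ∧ √n / 4 ≤ (U n).card ∧
      ∀ k ∈ U n, |mag n k - m| ≤ r n + 1 / √n)
    (hV : ∀ᶠ n in atTop, V n ⊆ Finset.range (n + 1) ∧ √n / 4 ≤ (V n).card ∧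
      ∀ k ∈ V n, |mag n k - m| ≤ 1 / √n) :
    Tendsto (fun n => 1 / a n ^ 2 * log ((∑ k ∈ T n, levelWeight n K J k) /
      ∑ k ∈ Finset.range (n + 1), levelWeight n K J k)) atTop (nhds (-(x ^ 2) / 2)) := by
  set c := iteratedDeriv 2 (phiKJ K J) m with hc
  have hsc : 0 < √c := by positivity
  have hcc : √c ^ 2 = c := Real.sq_sqrt hconv.le
  have hr0 : ∀ n, 0 ≤ r n := fun n => by
    rw [hr]; have := (hapos n).le; positivity
  have hsinv : Tendsto (fun n : ℕ => 1 / √(n : ℝ)) atTop (nhds 0) := by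
    have := (Real.tendsto_sqrt_atTop.comp tendsto_natCast_atTop_atTop).inv_tendsto_atTop (α := ℕ)
    simpa [Function.comp_def, one_div] using! this
  have hrlim : Tendsto (fun n => r n + 1 / √(n : ℝ)) atTop (nhds 0) := by
    have h1 := (hsq.mul_const (x / √c)).add hsinv
    rw [zero_mul, zero_add] at h1
    refine h1.congr fun n => ?_
    rw [hr]; congr 1; rw [div_mul_div_comm]
  have hpos : ∀ n, 0 < ∑ k ∈ Finset.range (n + 1), levelWeight n K J k := fun n =>
    Finset.sum_pos (fun k hk => levelWeight_pos K J (by have := Finset.mem_range.1 hk; omega))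
      (by simp)
  -- numerator and denominator are both rescaled by `exp (n φ(m))`
  have hscale : ∀ n, (∑ k ∈ T n, levelWeight n K J k) /
      ∑ k ∈ Finset.range (n + 1), levelWeight n K J k =
      (∑ k ∈ T n, levelWeight n K J k * exp (n * phiKJ K J m)) /
      ∑ k ∈ Finset.range (n + 1), levelWeight n K J k * exp (n * phiKJ K J m) := by
    intro n
    rw [← Finset.sum_mul, ← Finset.sum_mul, mul_div_mul_right _ _ (exp_pos _).ne']
  have hposE : ∀ n, 0 < ∑ k ∈ Finset.range (n + 1), levelWeight n K J k *
      exp (n * phiKJ K J m) := fun n => by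
    rw [← Finset.sum_mul]; exact mul_pos (hpos n) (exp_pos _)
  have hnonneg : ∀ n, ∀ k ∈ Finset.range (n + 1),
      0 ≤ levelWeight n K J k * exp (n * phiKJ K J m) := fun n k hk =>
    (mul_pos (levelWeight_pos K J (by have := Finset.mem_range.1 hk; omega)) (exp_pos _)).le
  have hTr : ∀ n, T n ⊆ Finset.range (n + 1) := fun n => (hT n).trans (Finset.filter_subset _ _)
  refine tendsto_log_of_bounds hapos hainf x √c ?_ ?_
  · intro ε hε hε1
    obtain ⟨C, hC, η, hη, hub⟩ := upper_bound hmem hmin huniq hconv hε hε1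
    obtain ⟨δ, hδ, -, hlb⟩ := lower_bound hmem hmin hconv hε
    rw [← hc] at hub hlb
    set z := 1 / 16 * exp (-(c / 2 * (1 + ε))) with hz
    have hz0 : 0 < z := by positivity
    refine ⟨(C + 1) / z, by positivity, ?_⟩
    have hsmall : ∀ᶠ n in atTop, (a n / √n) ^ 2 * x ^ 2 < η := by
      have := (hsq.pow 2).mul_const (x ^ 2)
      exact this.eventually_lt_const (by simpa using hη)
    filter_upwards [eventually_poly_exp hη, hV, hsinv.eventually_lt_const hδ, hsmall,
      eventually_gt_atTop 0] with n hpe hVn hδn hsm hn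
    have hn' : (0 : ℝ) < n := by positivity
    have hnn : √(n : ℝ) ^ 2 = n := Real.sq_sqrt hn'.le
    have hZ : z ≤ ∑ k ∈ Finset.range (n + 1), levelWeight n K J k * exp (n * phiKJ K J m) := by
      have h1 := hlb n hn.ne' (1 / √n) hδn.le (V n) hVn.2.1 hVn.2.2
      refine le_trans (le_of_eq ?_) (h1.trans
        (Finset.sum_le_sum_of_subset_of_nonneg hVn.1 fun k hk _ => hnonneg n k hk))
      rw [hz, div_pow, hnn]; congr 2; field_simp
    have hN : ∑ k ∈ T n, levelWeight n K J k * exp (n * phiKJ K J m) ≤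
        (C + 1) * exp (-((1 - ε) * (a n * x) ^ 2 / 2)) := by
      refine (Finset.sum_le_sum_of_subset_of_nonneg (hT n) fun k hk _ =>
        hnonneg n k (Finset.mem_filter.1 hk).1).trans ((hub n hn.ne' (r n) (hr0 n)).trans ?_)
      rw [add_mul C 1, one_mul]
      refine add_le_add (le_of_eq ?_) (hpe.trans ?_)
      · congr 2
        rw [hr, div_pow, mul_pow (√(n : ℝ)), hnn, hcc]
        field_simp
      · rw [exp_le_exp, neg_le_neg_iff]
        rw [div_pow, hnn, div_mul_eq_mul_div, div_lt_iff₀ hn'] at hsm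
        nlinarith [sq_nonneg (a n * x)]
    rw [hscale, div_mul_eq_mul_div]
    have h0 : 0 ≤ ∑ k ∈ T n, levelWeight n K J k * exp (n * phiKJ K J m) :=
      Finset.sum_nonneg fun k hk => hnonneg n k (hTr n hk)
    gcongr
  · intro ε hε hε1
    obtain ⟨C, hC, η, hη, hub⟩ := upper_bound hmem hmin huniq hconv hε hε1
    obtain ⟨δ, hδ, -, hlb⟩ := lower_bound hmem hmin hconv hε
    rw [← hc] at hub hlb
    refine ⟨1 / 16 / (C + 1), by positivity, ?_⟩
    filter_upwards [eventually_poly_exp hη, hU, hrlim.eventually_lt_const hδ,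
      eventually_gt_atTop 0] with n hpe hUn hδn hn
    have hn' : (0 : ℝ) < n := by positivity
    have hnn : √(n : ℝ) ^ 2 = n := Real.sq_sqrt hn'.le
    have hZ : ∑ k ∈ Finset.range (n + 1), levelWeight n K J k * exp (n * phiKJ K J m) ≤
        C + 1 := by
      have h1 := hub n hn.ne' 0 le_rfl
      rw [Finset.filter_true_of_mem (fun k _ => abs_nonneg _)] at h1
      refine h1.trans ?_
      have h2 : exp (-(n * (η / 2))) ≤ 1 := by
        rw [exp_le_one_iff, neg_nonpos]; positivity
      simp only [ne_eq, OfNat.ofNat_ne_zero, not_false_eq_true, zero_pow, mul_zero, neg_zero,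
        exp_zero, mul_one]
      linarith
    have hN := hlb n hn.ne' _ hδn.le (U n) hUn.2.1 hUn.2.2
    have hN' := hN.trans (Finset.sum_le_sum_of_subset_of_nonneg hUn.1 fun k hk _ =>
      hnonneg n k (hTr n hk))
    have hexpo : n * (c / 2 * (1 + ε)) * (r n + 1 / √n) ^ 2 =
        (1 + ε) * (a n * x + √c) ^ 2 / 2 := by
      have h1 : r n + 1 / √n = (a n * x + √c) / (√n * √c) := by
        rw [hr]; field_simp
      rw [h1, div_pow, mul_pow (√(n : ℝ)), hnn, hcc]
      field_simp
    rw [hexpo] at hN'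
    rw [hscale, div_mul_eq_mul_div]
    exact div_le_div₀ (Finset.sum_nonneg fun k hk => hnonneg n k (hTr n hk)) hN' (hposE n) hZ

/-- Just to the right of `r` there are at least `√n / 4` levels in a window of length `1 / √n`. -/
lemma right_window {m : ℝ} (hm : m ∈ Set.Ioo (-1 : ℝ) 1) {n : ℕ} (hn : 16 ≤ n) {r : ℝ}
    (hr : 0 ≤ r) (hR : r + 1 / √n < 1 - |m|) :
    ∃ U : Finset ℕ, √n / 4 ≤ U.card ∧ ∀ k ∈ U, k < n + 1 ∧ r < mag n k - m ∧
      |mag n k - m| ≤ r + 1 / √n := by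
  have hn' : (0 : ℝ) < n := by positivity
  have hsn : 0 < √(n : ℝ) := by positivity
  have hnn : √(n : ℝ) * √n = n := Real.mul_self_sqrt hn'.le
  have h4 : 4 ≤ √(n : ℝ) := by
    rw [Real.le_sqrt' (by norm_num)]; norm_num; exact_mod_cast hn
  have hinv : n / 2 * (1 / √n) = √(n : ℝ) / 2 := by
    rw [← hnn, Real.sqrt_mul_self hsn.le]; field_simp
  obtain ⟨t, ht⟩ : ∃ t, t = n * (1 + m + r) / 2 := ⟨_, rfl⟩
  have ht0 : 0 ≤ t := by
    have : 0 ≤ 1 + m + r := by linarith [hm.1]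
    rw [ht]; positivity
  refine ⟨Finset.Ioc ⌊t⌋₊ ⌊t + √n / 2⌋₊, ?_, fun k hk => ?_⟩
  · have h1 : ⌊t⌋₊ ≤ ⌊t + √n / 2⌋₊ := Nat.floor_le_floor (by linarith)
    rw [Nat.card_Ioc, Nat.cast_sub h1]
    linarith [Nat.floor_le ht0, Nat.lt_floor_add_one (t + √n / 2)]
  · obtain ⟨hk1, hk2⟩ := Finset.mem_Ioc.1 hk
    have hk1' : t < k := (Nat.floor_lt ht0).1 hk1
    have hk2' : (k : ℝ) ≤ t + √n / 2 := (Nat.le_floor_iff (by positivity)).1 hk2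
    have hu : mag n k - m = r + 2 / n * (k - t) := by
      rw [mag, ht]; field_simp; ring
    have h5 : 2 / n * (k - t) ≤ 1 / √n := by
      calc 2 / n * (k - t) ≤ 2 / n * (√n / 2) := by gcongr; linarith
        _ = 2 / n * (n / 2 * (1 / √n)) := by rw [hinv]
        _ = _ := by field_simp
    have h6 : 0 < 2 / n * (k - t) := mul_pos (by positivity) (by linarith)
    refine ⟨?_, by linarith, by rw [abs_of_nonneg] <;> linarith⟩
    have h7 : mag n k ≤ 1 := by linarith [le_abs_self m]
    rw [mag, div_le_one hn'] at h7
    have : (k : ℝ) < n + 1 := by linarith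
    exact_mod_cast this

/-- The mirror image of `right_window`. -/
lemma left_window {m : ℝ} (hm : m ∈ Set.Ioo (-1 : ℝ) 1) {n : ℕ} (hn : 16 ≤ n) {r : ℝ}
    (hr : 0 ≤ r) (hR : r + 1 / √n < 1 - |m|) :
    ∃ U : Finset ℕ, √n / 4 ≤ U.card ∧ ∀ k ∈ U, k < n + 1 ∧ mag n k - m < -r ∧
      |mag n k - m| ≤ r + 1 / √n := by
  have hm' : -m ∈ Set.Ioo (-1 : ℝ) 1 := ⟨by linarith [hm.2], by linarith [hm.1]⟩
  obtain ⟨U, hU, h⟩ := right_window hm' hn hr (by rwa [abs_neg])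
  have hn' : (0 : ℝ) < n := by positivity
  refine ⟨U.image (fun k => n - k), ?_, fun j hj => ?_⟩
  · rw [Finset.card_image_of_injOn]
    · exact hU
    · intro i hi j hj hij
      have := (h i hi).1
      have := (h j hj).1
      simp only at hij
      omega
  · obtain ⟨k, hk, rfl⟩ := Finset.mem_image.1 hj
    obtain ⟨h1, h2, h3⟩ := h k hk
    have hneg : mag n (n - k) - m = -(mag n k - -m) := by
      rw [mag, mag, Nat.cast_sub (by omega)]; field_simp; ring
    rw [hneg, abs_neg]
    exact ⟨by omega, by linarith, h3⟩

/-- The event on `W_n` rewritten in terms of the deviation of the magnetization. -/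
lemma W_eq {n k : ℕ} (hn : n ≠ 0) {c : ℝ} (hc : 0 < c) (m : ℝ) :
    (2 * (k : ℝ) - n - n * m) / √(n / c) = (mag n k - m) * (√n * √c) := by
  have hn' : (0 : ℝ) < n := by positivity
  have hnn : √(n : ℝ) * √n = n := Real.mul_self_sqrt hn'.le
  rw [Real.sqrt_div hn'.le, mag, div_div_eq_mul_div, div_eq_iff (by positivity)]
  have : (mag n k - m) * (√n * √c) * √n = (mag n k - m) * n * √c := by
    linear_combination (mag n k - m) * √c * hnn
  rw [mag] at this
  rw [this]
  field_simp


/-- Moderate deviation principle for the rescaled magnetization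
`W_n = (S_n − n m*)/σ_n` of the cubic Curie–Weiss model (unique nondegenerate
phase): for any speed `a_n → ∞` with `a_n/n^{1/6} → 0` and any `x ≥ 0`,
`(1/a_n²) log P_{n,K,J}(W_n > a_n x) → −x²/2` and
`(1/a_n²) log P_{n,K,J}(W_n < −a_n x) → −x²/2`. -/
theorem stmt_19 (K J : ℝ) (hK : 0 < K) (mstar : ℝ)
    (hmem : mstar ∈ Set.Ioo (-1 : ℝ) 1)
    (hmin : ∀ y ∈ Set.Icc (-1 : ℝ) 1, phiKJ K J mstar ≤ phiKJ K J y)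
    (huniq : ∀ y ∈ Set.Icc (-1 : ℝ) 1, phiKJ K J y = phiKJ K J mstar → y = mstar)
    (hconv : 0 < iteratedDeriv 2 (phiKJ K J) mstar)
    (a : ℕ → ℝ) (hapos : ∀ n, 0 < a n)
    (hainf : Filter.Tendsto a Filter.atTop Filter.atTop)
    (haslow : Filter.Tendsto (fun n : ℕ => a n / (n : ℝ) ^ ((1 : ℝ)/6))
      Filter.atTop (nhds 0)) :
    ∀ x : ℝ, 0 ≤ x →
      Filter.Tendsto (fun n : ℕ =>
          (1 / (a n) ^ 2) * Real.log (cubicProb n K J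
            {y | a n * x < (totalMag n y - n * mstar) /
              Real.sqrt (n / iteratedDeriv 2 (phiKJ K J) mstar)}))
        Filter.atTop (nhds (-(x ^ 2) / 2)) ∧
      Filter.Tendsto (fun n : ℕ =>
          (1 / (a n) ^ 2) * Real.log (cubicProb n K J
            {y | (totalMag n y - n * mstar) /
              Real.sqrt (n / iteratedDeriv 2 (phiKJ K J) mstar) < -(a n * x)}))
        Filter.atTop (nhds (-(x ^ 2) / 2)) := by
  classical
  intro x hx
  have hsq := tendsto_div_sqrt haslow
  set c := iteratedDeriv 2 (phiKJ K J) mstar with hc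
  have hsc : 0 < √c := by positivity
  obtain ⟨r, hr⟩ : ∃ r : ℕ → ℝ, ∀ n, r n = a n * x / (√n * √c) := ⟨_, fun _ => rfl⟩
  have hr0 : ∀ n, 0 ≤ r n := fun n => by
    rw [hr]; have := (hapos n).le; positivity
  have hm1 : 0 < 1 - |mstar| := by linarith [abs_lt.2 hmem]
  have hsinv : Tendsto (fun n : ℕ => 1 / √(n : ℝ)) atTop (nhds 0) := by
    have := (Real.tendsto_sqrt_atTop.comp tendsto_natCast_atTop_atTop).inv_tendsto_atTop (α := ℕ)
    simpa [Function.comp_def, one_div] using! this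
  have hrlim : Tendsto (fun n => r n + 1 / √(n : ℝ)) atTop (nhds 0) := by
    have h1 := (hsq.mul_const (x / √c)).add hsinv
    rw [zero_mul, zero_add] at h1
    refine h1.congr fun n => ?_
    rw [hr]; congr 1; rw [div_mul_div_comm]
  -- the window around the minimizer that bounds the partition function from below
  have hV : ∀ᶠ n : ℕ in atTop, ∃ V : Finset ℕ, V ⊆ Finset.range (n + 1) ∧ √n / 4 ≤ V.card ∧
      ∀ k ∈ V, |mag n k - mstar| ≤ 1 / √n := by
    filter_upwards [hsinv.eventually_lt_const hm1, eventually_ge_atTop 16] with n h1 h2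
    obtain ⟨V, h3, h4⟩ := right_window hmem h2 le_rfl (by simpa using h1)
    exact ⟨V, fun k hk => Finset.mem_range.2 (h4 k hk).1, h3, fun k hk => by
      simpa using (h4 k hk).2.2⟩
  obtain ⟨V, hV⟩ := hV.choice
  constructor
  · set T : ℕ → Finset ℕ := fun n => (Finset.range (n + 1)).filter
      (fun k => r n < mag n k - mstar) with hTdef
    have hU : ∀ᶠ n : ℕ in atTop, ∃ U : Finset ℕ, U ⊆ T n ∧ √n / 4 ≤ U.card ∧
        ∀ k ∈ U, |mag n k - mstar| ≤ r n + 1 / √n := by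
      filter_upwards [hrlim.eventually_lt_const hm1, eventually_ge_atTop 16] with n h1 h2
      obtain ⟨U, h3, h4⟩ := right_window hmem h2 (hr0 n) h1
      exact ⟨U, fun k hk => Finset.mem_filter.2 ⟨Finset.mem_range.2 (h4 k hk).1, (h4 k hk).2.1⟩,
        h3, fun k hk => (h4 k hk).2.2⟩
    obtain ⟨U, hU⟩ := hU.choice
    refine (side_limit hmem hmin huniq hconv hapos hainf hsq hx hr (T := T) ?_ hU hV).congr' ?_
    · exact fun n k hk => Finset.mem_filter.2 ⟨(Finset.mem_filter.1 hk).1,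
        (Finset.mem_filter.1 hk).2.le.trans (le_abs_self _)⟩
    · filter_upwards [eventually_gt_atTop 0] with n hn
      have hn' : (0 : ℝ) < n := by positivity
      rw [cubicProb_eq n K J (fun t => a n * x < (t - n * mstar) / √(n / c))]
      have hfil : T n = (Finset.range (n + 1)).filter
          (fun k : ℕ => a n * x < (2 * (k : ℝ) - n - n * mstar) / √(n / c)) := by
        refine Finset.filter_congr fun k _ => ?_
        rw [W_eq hn.ne' hconv, hr, div_lt_iff₀ (by positivity)]
      rw [hfil]
  · set T : ℕ → Finset ℕ := fun n => (Finset.range (n + 1)).filter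
      (fun k => mag n k - mstar < -r n) with hTdef
    have hU : ∀ᶠ n : ℕ in atTop, ∃ U : Finset ℕ, U ⊆ T n ∧ √n / 4 ≤ U.card ∧
        ∀ k ∈ U, |mag n k - mstar| ≤ r n + 1 / √n := by
      filter_upwards [hrlim.eventually_lt_const hm1, eventually_ge_atTop 16] with n h1 h2
      obtain ⟨U, h3, h4⟩ := left_window hmem h2 (hr0 n) h1
      exact ⟨U, fun k hk => Finset.mem_filter.2 ⟨Finset.mem_range.2 (h4 k hk).1, (h4 k hk).2.1⟩,
        h3, fun k hk => (h4 k hk).2.2⟩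
    obtain ⟨U, hU⟩ := hU.choice
    refine (side_limit hmem hmin huniq hconv hapos hainf hsq hx hr (T := T) ?_ hU hV).congr' ?_
    · refine fun n k hk => Finset.mem_filter.2 ⟨(Finset.mem_filter.1 hk).1, ?_⟩
      have := (Finset.mem_filter.1 hk).2
      linarith [neg_le_abs (mag n k - mstar)]
    · filter_upwards [eventually_gt_atTop 0] with n hn
      have hn' : (0 : ℝ) < n := by positivity
      rw [cubicProb_eq n K J (fun t => (t - n * mstar) / √(n / c) < -(a n * x))]
      have hfil : T n = (Finset.range (n + 1)).filter
          (fun k : ℕ => (2 * (k : ℝ) - n - n * mstar) / √(n / c) < -(a n * x)) := by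
        refine Finset.filter_congr fun k _ => ?_
        rw [W_eq hn.ne' hconv, hr, ← neg_div, lt_div_iff₀ (by positivity)]
      rw [hfil]
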